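/- Let T be a finite tree (a connected acyclic simple graph) and let M be a set of vertices of T. Then there exists a set of vertices M' with M ⊆ M' and |M'| ≤ 2|M| such that every connected component C of T − M' has at most 2 neighbors in M', i.e., the set of vertices of M' adjacent in T to some vertex of C has cardinality at most 2. -/

import Mathlib

/-- The set of neighbors in `M'` of a connected component `C` of `T − M'`:
the vertices `q ∈ M'` adjacent in `T` to at least one vertex of `C`. -/
def componentNbrsIn {V : Type*} (T : SimpleGraph V) (M' : Set V)
    (C : (T.induce {v | v ∉ M'}).ConnectedComponent) : Set V :=
  {q | q ∈ M' ∧ ∃ v : ↥{v | v ∉ M'},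
      (T.induce {v | v ∉ M'}).connectedComponentMk v = C ∧ T.Adj q ↑v}

/-!
Insert the vertices of `M` one at a time, keeping the property that every component of the
complement has at most two neighbours. Inserting `x` can only break it for the pieces of the
component of `x`, whose neighbours lie among `x` and the old neighbours `a`, `b` of that component.
Inserting also the median `y` of `x`, `a`, `b` repairs this: `y` separates these three vertices
pairwise, so a piece has at most one of them besides `y` as a neighbour. Each vertex of `M` thus
costs at most two insertions.
-/

namespace LcaClosure

open SimpleGraph

variable {V : Type*} {T : SimpleGraph V} {M M' : Set V} {a b q q' u v w x y : V}

/-- The vertex `y` separates `u` from `v` in `T`, where `y` may be one of the two. -/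
def Separates (T : SimpleGraph V) (y u v : V) : Prop :=
  ∀ p : T.Walk u v, y ∈ p.support

/-- `v` is visible from `u` past the obstacles `M`: some walk from `u` to `v` meets `M` at most in
its endpoint `v`. If `v ∉ M` this says that `u` and `v` lie in one component of `T - M`. -/
def Visible (T : SimpleGraph V) (M : Set V) (u v : V) : Prop :=
  ∃ p : T.Walk u v, ∀ z ∈ p.support, z ∈ M → z = v

/-- The vertices of `M` visible from `v`. For `v ∉ M` these are the neighbours in `M` of the
component of `v` in `T - M`, while for `v ∈ M` only `v` is left, so that no case distinction on
`v ∈ M` is needed below. -/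
def gates (T : SimpleGraph V) (M : Set V) (v : V) : Set V :=
  {q ∈ M | Visible T M v q}

lemma Separates.symm (h : Separates T y u v) : Separates T y v u := fun p => by
  simpa only [Walk.support_reverse, List.mem_reverse] using h p.reverse

lemma isPath_append {p : T.Walk u v} {r : T.Walk v w} (hp : p.IsPath) (hr : r.IsPath)
    (h : ∀ z ∈ p.support, z ∈ r.support → z = v) : (p.append r).IsPath := by
  have hr' : (v :: r.support.tail).Nodup := by
    simpa only [Walk.cons_tail_support] using hr.support_nodup
  rw [Walk.isPath_def, Walk.support_append, List.nodup_append]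
  refine ⟨hp.support_nodup, hr'.of_cons, fun z hzp t htr hzt => ?_⟩
  subst hzt
  obtain rfl := h z hzp (List.mem_of_mem_tail htr)
  exact hr'.notMem htr

lemma separates_of_mem_support_of_isPath (hT : T.IsAcyclic) {p : T.Walk u v} (hp : p.IsPath)
    (hy : y ∈ p.support) : Separates T y u v := by
  classical
  intro r
  have hpr : r.bypass = p :=
    congrArg Subtype.val ((hT.subsingleton_path u v).elim r.toPath ⟨p, hp⟩)
  exact r.support_bypass_subset_support (hpr ▸ hy)

lemma separates_of_visible_support (hT : T.IsAcyclic) {r : T.Walk a b} (hr : r.IsPath)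
    (hy : y ∈ r.support) (hxy : Visible T {z | z ∈ r.support} x y) : Separates T y x b := by
  classical
  obtain ⟨p, hp⟩ := hxy
  have hpath : (p.bypass.append (r.dropUntil y hy)).IsPath :=
    isPath_append p.bypass_isPath (hr.dropUntil hy) fun z hzp hzr =>
      hp z (p.support_bypass_subset_support hzp) (r.support_dropUntil_subset_support hy hzr)
  exact separates_of_mem_support_of_isPath hT hpath
    ((Walk.mem_support_append_iff _ _).2 (Or.inl (Walk.end_mem_support _)))

lemma Visible.refl (T : SimpleGraph V) (M : Set V) (v : V) : Visible T M v v :=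
  ⟨Walk.nil, fun _ hz _ => by simpa only [Walk.support_nil, List.mem_singleton] using hz⟩

lemma Visible.cons (hvw : Visible T M v w) (hadj : T.Adj u v) (hu : u ∉ M) :
    Visible T M u w := by
  obtain ⟨p, hp⟩ := hvw
  refine ⟨Walk.cons hadj p, fun z hz hzM => ?_⟩
  rcases List.mem_cons.1 hz with rfl | hzp
  exacts [absurd hzM hu, hp z hzp hzM]

lemma Visible.trans (huv : Visible T M u v) (hv : v ∉ M) (hvw : Visible T M v w) :
    Visible T M u w := by
  obtain ⟨p, hp⟩ := huv
  obtain ⟨r, hr⟩ := hvw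
  refine ⟨p.append r, fun z hz hzM => ?_⟩
  rcases (Walk.mem_support_append_iff _ _).1 hz with hzp | hzr
  · exact absurd (hp z hzp hzM ▸ hzM) hv
  · exact hr z hzr hzM

lemma Visible.symm (huv : Visible T M u v) (hv : v ∉ M) : Visible T M v u := by
  obtain ⟨p, hp⟩ := huv
  refine ⟨p.reverse, fun z hz hzM => absurd (hp z ?_ hzM ▸ hzM) hv⟩
  simpa only [Walk.support_reverse, List.mem_reverse] using hz

lemma Visible.anti (hM : M ⊆ M') (huv : Visible T M' u v) : Visible T M u v :=
  huv.imp fun _ hp z hz hzM => hp z hz (hM hzM)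

lemma Visible.of_separates (hua : Visible T M u a) (hy : Separates T y u a) :
    Visible T M u y := by
  classical
  obtain ⟨p, hp⟩ := hua
  have hyp : y ∈ p.bypass.support := hy p.bypass
  refine ⟨p.bypass.takeUntil y hyp, fun z hz hzM => ?_⟩
  obtain rfl := hp z
    (p.support_bypass_subset_support (Walk.support_takeUntil_subset_support _ hyp hz)) hzM
  by_contra hzy
  exact Walk.endpoint_notMem_support_takeUntil p.bypass_isPath hyp hzy hz

lemma Visible.eq_or_eq_of_separates (hq : Visible T M v q) (hq' : Visible T M v q') (hyM : y ∈ M)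
    (hy : Separates T y q q') : y = q ∨ y = q' := by
  obtain ⟨p, hp⟩ := hq
  obtain ⟨p', hp'⟩ := hq'
  have hmem := hy (p.reverse.append p')
  rw [Walk.mem_support_append_iff, Walk.support_reverse, List.mem_reverse] at hmem
  exact hmem.imp (hp y · hyM) (hp' y · hyM)

lemma exists_visible_of_reachable (huv : T.Reachable u v) (hv : v ∈ M) :
    ∃ y ∈ M, Visible T M u y := by
  obtain ⟨p⟩ := huv
  induction p with
  | nil => exact ⟨_, hv, Visible.refl T M _⟩
  | @cons u _ _ hadj _ ih =>
    by_cases hu : u ∈ M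
    · exact ⟨u, hu, Visible.refl T M u⟩
    · obtain ⟨y, hyM, hy⟩ := ih hv
      exact ⟨y, hyM, hy.cons hadj hu⟩

lemma exists_separates_triple (hT : T.IsAcyclic) (hxa : T.Reachable x a) (hxb : T.Reachable x b) :
    ∃ y, Separates T y a b ∧ Separates T y x a ∧ Separates T y x b := by
  obtain ⟨r, hr⟩ := (hxa.symm.trans hxb).exists_isPath
  -- The median is the first vertex of the path `r` from `a` to `b` met on the way from `x`.
  obtain ⟨y, hy, hxy⟩ :=
    exists_visible_of_reachable (M := {z | z ∈ r.support}) hxa r.start_mem_support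
  refine ⟨y, separates_of_mem_support_of_isPath hT hr hy, ?_,
    separates_of_visible_support hT hr hy hxy⟩
  apply separates_of_visible_support hT hr.reverse
  · simpa only [Walk.support_reverse, List.mem_reverse, Set.mem_ofPred_eq] using hy
  · simpa only [Walk.support_reverse, List.mem_reverse] using hxy

lemma gates_subset_gates_of_visible (huv : Visible T M u v) (hv : v ∉ M) :
    gates T M v ⊆ gates T M u :=
  fun _ hq => ⟨hq.1, huv.trans hv hq.2⟩

lemma gates_eq_of_visible (huv : Visible T M u v) (hv : v ∉ M) : gates T M u = gates T M v := by
  refine (gates_subset_gates_of_visible huv hv).antisymm' fun q hq => ⟨hq.1, ?_⟩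
  by_cases hu : u ∈ M
  · obtain ⟨p, hp⟩ := huv
    exact absurd (hp u p.start_mem_support hu ▸ hu) hv
  · exact (huv.symm hv).trans hu hq.2

lemma gates_subset_or_subset_of_visible (hM : M ⊆ M') (hx : ∀ z ∈ M' \ M, Visible T M x z)
    (v : V) :
    gates T M' v ⊆ gates T M v ∨ gates T M' v ⊆ gates T M x ∪ M' \ M := by
  have hold : gates T M' v ∩ M ⊆ gates T M v := fun q hq => ⟨hq.2, hq.1.2.anti hM⟩
  by_cases hnew : gates T M' v ⊆ M
  · exact Or.inl fun q hq => hold ⟨hq, hnew hq⟩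
  · obtain ⟨z, hz, hzM⟩ := Set.not_subset.1 hnew
    have hvx : gates T M v = gates T M x :=
      (gates_eq_of_visible (hz.2.anti hM) hzM).trans
        (gates_eq_of_visible (hx z ⟨hz.1, hzM⟩) hzM).symm
    refine Or.inr fun q hq => ?_
    by_cases hqM : q ∈ M
    · exact Or.inl (hvx ▸ hold ⟨hq, hqM⟩)
    · exact Or.inr ⟨hq.1, hqM⟩

lemma gates_encard_le_two_of_pairwise_separates (hy : y ∈ M) {s : Set V}
    (hs : s.Pairwise (Separates T y)) (hv : gates T M v ⊆ insert y s) :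
    (gates T M v).encard ≤ 2 := by
  have hsub : (gates T M v \ {y}).Subsingleton := by
    rintro q ⟨hq, hqy⟩ q' ⟨hq', hqy'⟩
    by_contra hne
    have hsep := hs ((hv hq).resolve_left hqy) ((hv hq').resolve_left hqy') hne
    exact (hq.2.eq_or_eq_of_separates hq'.2 hy hsep).elim (hqy ·.symm) (hqy' ·.symm)
  calc (gates T M v).encard
      ≤ (gates T M v \ {y}).encard + 1 :=
        tsub_le_iff_right.1 (Set.encard_tsub_one_le_encard_sdiff_singleton _ _)
    _ ≤ 1 + 1 := by gcongr; exact Set.encard_le_one_iff_subsingleton.2 hsub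
    _ = 2 := one_add_one_eq_two

lemma exists_mem_insert_subset_pair {α : Type*} {s : Set α} (hs : s.encard ≤ 2) (x : α) :
    ∃ a ∈ insert x s, ∃ b ∈ insert x s, s ⊆ {a, b} := by
  rcases hs.lt_or_eq with hlt | heq
  · rw [← one_add_one_eq_two] at hlt
    rcases Set.encard_le_one_iff_eq.1 (Order.le_of_lt_add_one hlt) with rfl | ⟨a, rfl⟩
    · exact ⟨x, by simp, x, by simp, by simp⟩
    · exact ⟨a, by simp, a, by simp, by simp⟩
  · obtain ⟨a, b, -, rfl⟩ := Set.encard_eq_two.1 heq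
    exact ⟨a, by simp, b, by simp, subset_rfl⟩

lemma exists_insert_insert_gates_encard_le_two (hT : T.IsAcyclic)
    (hM : ∀ v, (gates T M v).encard ≤ 2) (x : V) :
    ∃ y, ∀ v, (gates T (insert x (insert y M)) v).encard ≤ 2 := by
  have hvis : ∀ z ∈ insert x (gates T M x), Visible T M x z := by
    rintro z (rfl | hz)
    exacts [Visible.refl T M z, hz.2]
  obtain ⟨a, ha, b, hb, hab⟩ := exists_mem_insert_subset_pair (hM x) x
  obtain ⟨pa, hpa⟩ := hvis a ha
  obtain ⟨pb, -⟩ := hvis b hb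
  obtain ⟨y, hyab, hyxa, hyxb⟩ := exists_separates_triple hT pa.reachable pb.reachable
  have hxy : Visible T M x y := (hvis a ha).of_separates hyxa
  have hpair : ({x, a, b} : Set V).Pairwise (Separates T y) := by
    have : Std.Symm (Separates T y) := ⟨fun _ _ => Separates.symm⟩
    simp [Set.pairwise_insert_of_symm, hyab, hyxa, hyxb]
  have hdiff : insert x (insert y M) \ M ⊆ {x, y} := by
    rintro z ⟨rfl | rfl | hz, hzM⟩
    exacts [Or.inl rfl, Or.inr rfl, absurd hz hzM]
  refine ⟨y, fun v => ?_⟩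
  have hcases := gates_subset_or_subset_of_visible (T := T) (x := x)
    ((Set.subset_insert y M).trans (Set.subset_insert x _)) (fun z hz => by
      rcases hdiff hz with rfl | rfl
      exacts [Visible.refl T M z, hxy]) v
  rcases hcases with hold | hnew
  · exact (Set.encard_le_encard hold).trans (hM v)
  · refine gates_encard_le_two_of_pairwise_separates (by simp) hpair (hnew.trans ?_)
    exact (Set.union_subset_union hab hdiff).trans (by grind)

lemma exists_superset_gates_encard_le_two (hT : T.IsAcyclic) (hM : M.Finite) :
    ∃ M' : Set V, M ⊆ M' ∧ M'.Finite ∧ M'.ncard ≤ 2 * M.ncard ∧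
      ∀ v, (gates T M' v).encard ≤ 2 := by
  induction M, hM using Set.Finite.induction_on with
  | empty => exact ⟨∅, subset_rfl, Set.finite_empty, by simp, fun v => by simp [gates]⟩
  | @insert x M hx hM ih =>
    obtain ⟨M', hsub, hfin, hcard, hgates⟩ := ih
    obtain ⟨y, hy⟩ := exists_insert_insert_gates_encard_le_two hT hgates x
    refine ⟨_, Set.insert_subset_insert (hsub.trans (Set.subset_insert y M')),
      (hfin.insert y).insert x, ?_, hy⟩
    calc (insert x (insert y M')).ncard
        ≤ M'.ncard + 1 + 1 :=
          (Set.ncard_insert_le _ _).trans (Nat.add_le_add_right (Set.ncard_insert_le _ _) 1)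
      _ ≤ 2 * (M.ncard + 1) := by omega
      _ = 2 * (insert x M).ncard := by rw [Set.ncard_insert_of_notMem hx hM]

lemma visible_of_reachable_induce {v w : {v | v ∉ M}} (h : (T.induce {v | v ∉ M}).Reachable v w) :
    Visible T M v w := by
  obtain ⟨p⟩ := h
  induction p with
  | nil => exact Visible.refl T M _
  | @cons u _ _ hadj _ ih => exact ih.cons (induce_adj.1 hadj) u.2

lemma componentNbrsIn_connectedComponentMk_subset_gates (v : {v | v ∉ M}) :
    componentNbrsIn T M ((T.induce {v | v ∉ M}).connectedComponentMk v) ⊆ gates T M v := by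
  rintro q ⟨hqM, w, hw, hadj⟩
  have hvw : Visible T M v w := visible_of_reachable_induce (ConnectedComponent.exact hw.symm)
  exact ⟨hqM, hvw.trans w.2 ((Visible.refl T M q).cons hadj.symm w.2)⟩

end LcaClosure

theorem lca_closure_bound_general {V : Type*} {T : SimpleGraph V} (hT : T.IsAcyclic)
    {M : Set V} (hM : M.Finite) :
    ∃ M' : Set V, M ⊆ M' ∧ M'.Finite ∧ M'.ncard ≤ 2 * M.ncard ∧
      ∀ C : (T.induce {v | v ∉ M'}).ConnectedComponent,
        (componentNbrsIn T M' C).encard ≤ 2 := by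
  obtain ⟨M', hsub, hfin, hcard, hgates⟩ :=
    LcaClosure.exists_superset_gates_encard_le_two hT hM
  refine ⟨M', hsub, hfin, hcard, fun C => ?_⟩
  induction C using SimpleGraph.ConnectedComponent.ind with
  | h v =>
    exact (Set.encard_le_encard
      (LcaClosure.componentNbrsIn_connectedComponentMk_subset_gates v)).trans (hgates v)

/-- LCA-closure lemma: for every finite tree `T` and vertex set `M`, there is a
superset `M'` of `M` with `|M'| ≤ 2|M|` such that every connected component of
`T − M'` has at most two neighbors in `M'`. -/
theorem lca_closure_bound {V : Type*} [Fintype V]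
    (T : SimpleGraph V) (hT : T.IsTree) (M : Set V) :
    ∃ M' : Set V, M ⊆ M' ∧ M'.ncard ≤ 2 * M.ncard ∧
      ∀ C : (T.induce {v | v ∉ M'}).ConnectedComponent,
        (componentNbrsIn T M' C).ncard ≤ 2 := by
  obtain ⟨M', hsub, -, hcard, hC⟩ := lca_closure_bound_general hT.isAcyclic M.toFinite
  exact ⟨M', hsub, hcard, fun C => ENat.toNat_le_of_le_natCast (hC C)⟩
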